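/- arXiv:0705.2404 — 3 statements merged into one kernel-verified Lean document; each statement's English description precedes it below -/
import Mathlib

section
/- For every position G of the octal game 0.26 (including the empty position), G is a misère P-position if and only if Φ(G) ∈ P. -/
/-- One legal move in the octal game 0.26. -/
def Move026 (G G' : Multiset ℕ) : Prop :=
  (∃ k ∈ G, 2 ≤ k ∧ G' = (k - 1) ::ₘ G.erase k) ∨
  (∃ k ∈ G, 3 ≤ k ∧ G' = (k - 2) ::ₘ G.erase k) ∨
  (∃ k ∈ G, 4 ≤ k ∧ ∃ i j : ℕ, 1 ≤ i ∧ 1 ≤ j ∧ i + j = k - 2 ∧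
    G' = i ::ₘ j ::ₘ G.erase k)

/-- Generators of the misère quotient of 0.26: `a`, `b`, and `c n` for `n : ℕ`. -/
inductive Gen026 where
  | a : Gen026
  | b : Gen026
  | c : ℕ → Gen026

/-- The free commutative monoid on the generators, written multiplicatively. -/
abbrev FM026 := Multiplicative (Multiset Gen026)

/-- The generator `x` as an element of the free commutative monoid. -/
def fgen026 (x : Gen026) : FM026 := Multiplicative.ofAdd {x}

def fa : FM026 := fgen026 .a
def fb : FM026 := fgen026 .b
def fc (n : ℕ) : FM026 := fgen026 (.c n)

/-- The defining relations of the quotient `Q`: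
`a² = 1`, `b^(n+1) c_n = b^(2n+3)`, and `c_m c_n = b^(m+2) c_n` for `m ≤ n`. -/
def rel026 : FM026 → FM026 → Prop := fun x y =>
  (x = fa ^ 2 ∧ y = 1) ∨
  (∃ n : ℕ, x = fb ^ (n + 1) * fc n ∧ y = fb ^ (2 * n + 3)) ∨
  (∃ m n : ℕ, m ≤ n ∧ x = fc m * fc n ∧ y = fb ^ (m + 2) * fc n)

/-- The commutative monoid `Q` presented by generators `a`, `b`, `c_n` and the
relations `rel026`. -/
def Q026 : Type := (conGen rel026).Quotient

instance : CommMonoid Q026 := Con.commMonoid _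

/-- The image of `a` in `Q`. -/
def qa : Q026 := (conGen rel026).mk' fa
/-- The image of `b` in `Q`. -/
def qb : Q026 := (conGen rel026).mk' fb
/-- The image of `c_n` in `Q`. -/
def qc (n : ℕ) : Q026 := (conGen rel026).mk' (fc n)

/-- The P-portion `P = {a} ∪ {b^(2m) : m ≥ 1} ∪ {b^m c_n : m ≤ n, m + n odd}`. -/
def P026 : Set Q026 :=
  {x | x = qa} ∪
  {x | ∃ m : ℕ, 1 ≤ m ∧ x = qb ^ (2 * m)} ∪
  {x | ∃ m n : ℕ, m ≤ n ∧ (m + n) % 2 = 1 ∧ x = qb ^ m * qc n}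

/-- The pretending function on single heaps. -/
noncomputable def phi026 (k : ℕ) : Q026 :=
  if k ≤ 8 then
    (if k % 4 = 1 then 1 else if k % 4 = 2 then qa
     else if k % 4 = 3 then qb else qa * qb)
  else if k = 9 then qc 0
  else if k = 10 then qa * qc 0
  else if k % 2 = 1 then qc ((k - 9) / 2)
  else qa * qb * qc ((k - 12) / 2)

/-- The pretending function extended multiplicatively to positions. -/
noncomputable def Phi026 (G : Multiset ℕ) : Q026 := (G.map phi026).prod

/-!
Give the generators `a`, `b`, `c n` the weights `0`, `1`, `n + 2` and the levels `0`, `0`,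
`2 * n + 3`. The relations of `Q` preserve the parity of the exponent `e` of `a`, the total weight
`w`, and the maximum of `w` and the largest level `M`. These three numbers are enough to tell the
normal forms `a ^ e * b ^ w` and `a ^ e * b ^ m * c n` with `m ≤ n` apart, the second kind being the
one with `w < M`. Membership in the P-portion therefore reads: either `e` is odd and `w = 0`, or `e`
is even and `w` is even and positive with `M ≤ w`, or `e` is even and `w` is odd with `w < M`.

No move joins two positions that meet this criterion: a move changes the parity of `e`, unless it
takes two beans from a heap, which changes the parity of `w`; the case `w = 0` only concerns heaps
of size at most `6`. Conversely, a position that violates the criterion and has a move can be moved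
into the criterion. Apart from a few small heaps, one lowers `w` by one while steering the parity of
`e`, or, if only the parity of `e` is wrong, corrects it while keeping `w` or lowering it by two.
Hence the criterion solves the recursion for misère P-positions, whose solution is unique.
-/

section MisereOutcome

variable {α : Type*} {Move : α → α → Prop} {V P P' : α → Prop}

/-- The recursion that defines misère P-positions, at the position `G`: there is a move from `G`,
and no move from `G` leads to a P-position. -/
def MisereRecursion (Move : α → α → Prop) (P : α → Prop) (G : α) : Prop :=
  P G ↔ (∃ G', Move G G') ∧ ∀ G', Move G G' → ¬ P G'

theorem MisereRecursion.unique (hwf : WellFounded (flip Move))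
    (hV : ∀ G G', V G → Move G G' → V G') (hP : ∀ G, V G → MisereRecursion Move P G)
    (hP' : ∀ G, V G → MisereRecursion Move P' G) {G : α} (hG : V G) : P G ↔ P' G := by
  induction G using hwf.induction with
  | _ G ih =>
    refine (hP G hG).trans (Iff.trans ?_ (hP' G hG).symm)
    exact and_congr_right fun _ => forall₂_congr fun G' hm => not_congr (ih G' hm (hV G G' hG hm))

end MisereOutcome

namespace Octal026

/-! ### Moves -/

/-- The options of a single heap of 0.26. -/
inductive HeapMove (k : ℕ) : Multiset ℕ → Prop
  | takeOne (hk : 2 ≤ k) : HeapMove k {k - 1}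
  | takeTwo (hk : 3 ≤ k) : HeapMove k {k - 2}
  | split {i j : ℕ} (hi : 1 ≤ i) (hj : 1 ≤ j) (hij : i + j + 2 = k) : HeapMove k {i, j}

variable {k : ℕ} {G G' R S : Multiset ℕ}

lemma HeapMove.move026_cons (h : HeapMove k S) (R : Multiset ℕ) :
    Move026 (k ::ₘ R) (S + R) := by
  cases h with
  | takeOne hk => exact .inl ⟨k, by simp, hk, by simp⟩
  | takeTwo hk => exact .inr (.inl ⟨k, by simp, hk, by simp⟩)
  | @split i j hi hj hij =>
    exact .inr (.inr ⟨k, by simp, by omega, i, j, hi, hj, by omega, by simp⟩)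

lemma move026_iff :
    Move026 G G' ↔ ∃ k S R, HeapMove k S ∧ G = k ::ₘ R ∧ G' = S + R := by
  constructor
  · rintro (⟨k, hk, h, rfl⟩ | ⟨k, hk, h, rfl⟩ | ⟨k, hk, h, i, j, hi, hj, hij, rfl⟩)
    · exact ⟨k, _, _, .takeOne h, (Multiset.cons_erase hk).symm, by simp⟩
    · exact ⟨k, _, _, .takeTwo h, (Multiset.cons_erase hk).symm, by simp⟩
    · exact ⟨k, _, _, .split hi hj (by omega), (Multiset.cons_erase hk).symm, by simp⟩
  · rintro ⟨k, S, R, h, rfl, rfl⟩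
    exact h.move026_cons R

lemma HeapMove.two_le (h : HeapMove k S) : 2 ≤ k := by
  cases h <;> omega

lemma HeapMove.pos (h : HeapMove k S) : ∀ i ∈ S, 1 ≤ i := by
  cases h <;> grind [Multiset.insert_eq_cons, Multiset.mem_singleton]

lemma HeapMove.sum_lt (h : HeapMove k S) : S.sum < k := by
  cases h <;>
    simp only [Multiset.sum_singleton, Multiset.insert_eq_cons, Multiset.sum_cons] <;> omega

lemma wellFounded_flip_move026 : WellFounded (flip Move026) := by
  refine Subrelation.wf (fun {G' G} hm => ?_) (InvImage.wf Multiset.sum wellFounded_lt)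
  obtain ⟨k, S, R, h, rfl, rfl⟩ := move026_iff.1 hm
  change (S + R).sum < (k ::ₘ R).sum
  rw [Multiset.sum_add, Multiset.sum_cons]
  exact Nat.add_lt_add_right h.sum_lt _

lemma pos_of_move026 (hpos : ∀ k ∈ G, 1 ≤ k) (hm : Move026 G G') : ∀ k ∈ G', 1 ≤ k := by
  obtain ⟨k, S, R, h, rfl, rfl⟩ := move026_iff.1 hm
  intro i hi
  rcases Multiset.mem_add.1 hi with hS | hR
  · exact h.pos i hS
  · exact hpos i (Multiset.mem_cons_of_mem hR)

/-! ### Weights and levels -/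

/-- The weight of the value of a heap of size `k`, where the generators `a`, `b`, `c n` weigh `0`,
`1`, `n + 2`. For `k = 0` the value is junk. -/
def heapWeight (k : ℕ) : ℕ := if k ≤ 8 then (k - 1) / 2 % 2 else (k - 5) / 2

/-- The level of the value of a heap of size `k`, where the generators `a`, `b`, `c n` have levels
`0`, `0`, `2 * n + 3`. -/
def heapLevel (k : ℕ) : ℕ :=
  if k ≤ 8 then 0 else if k = 10 then 3 else if k % 2 = 1 then k - 6 else k - 9

/-- The number of even heaps of a position, which is the exponent of `a` in its value. -/
def evenCount (G : Multiset ℕ) : ℕ := (G.map fun k => (k + 1) % 2).sum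

/-- The weight of a position: the total weight of its heaps. -/
def weight (G : Multiset ℕ) : ℕ := (G.map heapWeight).sum

/-- The level of a position: the largest level of its heaps. -/
def level (G : Multiset ℕ) : ℕ := (G.map heapLevel).sup

lemma evenCount_cons (k : ℕ) (G : Multiset ℕ) :
    evenCount (k ::ₘ G) = (k + 1) % 2 + evenCount G := by simp [evenCount]

lemma weight_cons (k : ℕ) (G : Multiset ℕ) :
    weight (k ::ₘ G) = heapWeight k + weight G := by simp [weight]

lemma level_cons (k : ℕ) (G : Multiset ℕ) :
    level (k ::ₘ G) = max (heapLevel k) (level G) := by simp [level]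

lemma evenCount_singleton (k : ℕ) : evenCount {k} = (k + 1) % 2 := by simp [evenCount]
lemma weight_singleton (k : ℕ) : weight {k} = heapWeight k := by simp [weight]
lemma level_singleton (k : ℕ) : level {k} = heapLevel k := by simp [level]

lemma evenCount_pair (i j : ℕ) : evenCount {i, j} = (i + 1) % 2 + (j + 1) % 2 := by
  simp [evenCount]

lemma weight_pair (i j : ℕ) : weight {i, j} = heapWeight i + heapWeight j := by simp [weight]

lemma level_pair (i j : ℕ) : level {i, j} = max (heapLevel i) (heapLevel j) := by simp [level]

lemma evenCount_add (G H : Multiset ℕ) : evenCount (G + H) = evenCount G + evenCount H := by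
  simp [evenCount]

lemma weight_add (G H : Multiset ℕ) : weight (G + H) = weight G + weight H := by
  simp [weight]

lemma level_add (G H : Multiset ℕ) : level (G + H) = max (level G) (level H) := by
  simp [level]

lemma heapLevel_eq_zero_or_odd (k : ℕ) : heapLevel k = 0 ∨ heapLevel k % 2 = 1 := by
  grind [heapLevel]

lemma heapLevel_le (k : ℕ) : heapLevel k ≤ 2 * heapWeight k - 1 := by
  grind [heapLevel, heapWeight]

lemma nine_le_of_heapLevel_pos (h : 0 < heapLevel k) : 9 ≤ k := by grind [heapLevel]

lemma level_eq_zero_or_odd (G : Multiset ℕ) : level G = 0 ∨ level G % 2 = 1 := by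
  induction G using Multiset.induction_on with
  | empty => exact .inl rfl
  | cons k G ih =>
    have := heapLevel_eq_zero_or_odd k
    rw [level_cons]
    omega

lemma level_le (G : Multiset ℕ) : level G ≤ 2 * weight G - 1 := by
  induction G using Multiset.induction_on with
  | empty => exact Nat.zero_le _
  | cons k G ih =>
    have := heapLevel_le k
    rw [level_cons, weight_cons]
    omega

lemma level_eq_zero_of_weight_eq_zero (h : weight G = 0) : level G = 0 := by
  have := level_le G
  omega

lemma exists_cons_of_evenCount_odd (h : evenCount G % 2 = 1) :
    ∃ k R, G = k ::ₘ R ∧ k % 2 = 0 := by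
  have hne : evenCount G ≠ 0 := by omega
  obtain ⟨k, hk, hk0⟩ : ∃ k ∈ G, (k + 1) % 2 ≠ 0 := by
    simpa [evenCount, Multiset.sum_eq_zero_iff] using hne
  obtain ⟨R, rfl⟩ := Multiset.exists_cons_of_mem hk
  exact ⟨k, R, rfl, by omega⟩

lemma exists_cons_of_weight_pos (h : 0 < weight G) : ∃ k R, G = k ::ₘ R ∧ 0 < heapWeight k := by
  obtain ⟨k, hk, hk0⟩ : ∃ k ∈ G, heapWeight k ≠ 0 := by
    simpa [weight, Multiset.sum_eq_zero_iff] using h.ne'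
  obtain ⟨R, rfl⟩ := Multiset.exists_cons_of_mem hk
  exact ⟨k, R, rfl, Nat.pos_of_ne_zero hk0⟩

lemma exists_cons_level_le (h : 0 < level G) : ∃ k R, G = k ::ₘ R ∧ level R ≤ heapLevel k := by
  have hG : G ≠ 0 := by
    rintro rfl
    exact lt_irrefl 0 h
  obtain ⟨k, hk, hmax⟩ := Multiset.exists_max_image heapLevel hG
  obtain ⟨R, rfl⟩ := Multiset.exists_cons_of_mem hk
  refine ⟨k, R, rfl, Multiset.sup_le.2 fun l hl => ?_⟩
  obtain ⟨i, hi, rfl⟩ := Multiset.mem_map.1 hl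
  exact hmax i (Multiset.mem_cons_of_mem hi)

/-! ### The numerical outcome criterion -/

/-- The weights `w` and levels `M` of the elements of the P-portion in which the exponent of `a` is
even: `b ^ w` with `w` even and positive, or `b ^ m * c n` with `m ≤ n` and `w = m + n + 2` odd. -/
def IsPPair (w M : ℕ) : Prop := (w % 2 = 0 ∧ 0 < w ∧ M ≤ w) ∨ (w % 2 = 1 ∧ w < M)

/-- The P-portion in terms of the exponent `e` of `a`, the weight `w` and the level `M`. -/
def IsPTriple (e w M : ℕ) : Prop := (e % 2 = 1 ∧ w = 0) ∨ (e % 2 = 0 ∧ IsPPair w M)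

/-- The numerical form of `Phi026 G ∈ P026`. -/
def IsPValue (G : Multiset ℕ) : Prop := IsPTriple (evenCount G) (weight G) (level G)

/-! ### No move joins two P-values -/

lemma le_six_of_heapWeight_eq_zero (h : heapWeight k = 0) : k ≤ 6 := by
  grind [heapWeight]

lemma HeapMove.odd_evenCount_add_or_takeTwo (h : HeapMove k S) :
    (evenCount S + (k + 1)) % 2 = 1 ∨ (3 ≤ k ∧ S = {k - 2}) := by
  cases h with
  | takeOne hk => left; rw [evenCount_singleton]; omega
  | takeTwo hk => exact .inr ⟨hk, rfl⟩
  | split hi hj hij => left; rw [evenCount_pair]; omega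

lemma HeapMove.not_isPPair_of_heapWeight_eq_zero (h : HeapMove k S) (hk : heapWeight k = 0) :
    ¬ IsPPair (weight S) (level S) := by
  have hk6 := le_six_of_heapWeight_eq_zero hk
  cases h <;> grind [IsPPair, weight_singleton, level_singleton, weight_pair, level_pair,
    heapWeight, heapLevel]

lemma HeapMove.not_isPPair_of_weight_eq_zero (h : HeapMove k S) (hS : weight S = 0) :
    ¬ IsPPair (heapWeight k) (heapLevel k) := by
  cases h <;> grind [IsPPair, weight_singleton, weight_pair, heapWeight, heapLevel]

lemma heapWeight_sub_two (hk : 3 ≤ k) :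
    heapWeight k = heapWeight (k - 2) + 1 ∨ heapWeight (k - 2) = heapWeight k + 1 := by
  grind [heapWeight]

-- The weight changes parity and levels are zero or odd, so the comparison of the two persists.
lemma not_isPPair_sub_two {w M : ℕ} (hk : 3 ≤ k) (hM : M = 0 ∨ M % 2 = 1)
    (h : IsPPair (heapWeight k + w) (max (heapLevel k) M)) :
    ¬ IsPPair (heapWeight (k - 2) + w) (max (heapLevel (k - 2)) M) := by
  grind [IsPPair, heapWeight, heapLevel]

theorem IsPValue.not_isPValue_of_move026 (hG : IsPValue G) (hm : Move026 G G') :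
    ¬ IsPValue G' := by
  obtain ⟨k, S, R, h, rfl, rfl⟩ := move026_iff.1 hm
  simp only [IsPValue, IsPTriple, evenCount_cons, weight_cons, level_cons, evenCount_add,
    weight_add, level_add] at hG ⊢
  rintro (⟨he', hw'⟩ | ⟨he', hP'⟩) <;> rcases hG with ⟨he, hw⟩ | ⟨he, hP⟩
  · rcases h.odd_evenCount_add_or_takeTwo with hodd | ⟨hk, rfl⟩
    · omega
    · have := heapWeight_sub_two hk
      rw [weight_singleton] at hw'
      omega
  · have hwR : weight R = 0 := by omega
    rw [hwR, level_eq_zero_of_weight_eq_zero hwR, add_zero, Nat.max_zero] at hP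
    exact h.not_isPPair_of_weight_eq_zero (by omega) hP
  · have hwR : weight R = 0 := by omega
    rw [hwR, level_eq_zero_of_weight_eq_zero hwR, add_zero, Nat.max_zero] at hP'
    exact h.not_isPPair_of_heapWeight_eq_zero (by omega) hP'
  · rcases h.odd_evenCount_add_or_takeTwo with hodd | ⟨hk, rfl⟩
    · omega
    · rw [weight_singleton, level_singleton] at hP'
      exact not_isPPair_sub_two hk (level_eq_zero_or_odd R) hP hP'

/-! ### Winning moves -/

/-- Some option of `G` has a P-value. -/
def HasPOption (G : Multiset ℕ) : Prop := ∃ G', Move026 G G' ∧ IsPValue G'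

lemma HeapMove.hasPOption (h : HeapMove k S)
    (hP : IsPTriple (evenCount S + evenCount R) (weight S + weight R) (max (level S) (level R))) :
    HasPOption (k ::ₘ R) :=
  ⟨S + R, h.move026_cons R, by rwa [IsPValue, evenCount_add, weight_add, level_add]⟩

lemma exists_heapMove_weight_pred (hk : 0 < heapWeight k) (e : ℕ) :
    ∃ S, HeapMove k S ∧ (evenCount S + e) % 2 = 0 ∧ weight S + 1 = heapWeight k ∧
      level S ≤ heapLevel k := by
  have hk3 : 3 ≤ k := by grind [heapWeight]
  by_cases hkeep : (k + 1 + e) % 2 = 0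
  · refine ⟨{k - 2}, .takeTwo hk3, ?_⟩
    grind [evenCount_singleton, weight_singleton, level_singleton, heapWeight, heapLevel]
  by_cases hodd : k % 2 = 1
  · refine ⟨{k - 1}, .takeOne (by omega), ?_⟩
    grind [evenCount_singleton, weight_singleton, level_singleton, heapWeight, heapLevel]
  · refine ⟨{1, k - 3}, .split le_rfl (by omega) (by omega), ?_⟩
    grind [evenCount_pair, weight_pair, level_pair, heapWeight, heapLevel]

-- Taking two beans from a heap of size 12 leaves the level at 3, because 10 is the exceptional even
-- size.
lemma exists_heapMove_weight_pred_level_lt {e : ℕ} (hk : 0 < heapLevel k)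
    (h12 : k = 12 → e % 2 = 0) :
    ∃ S, HeapMove k S ∧ (evenCount S + e) % 2 = 0 ∧ weight S + 1 = heapWeight k ∧
      level S < heapLevel k := by
  have hk9 := nine_le_of_heapLevel_pos hk
  by_cases hkeep : (k + 1 + e) % 2 = 0
  · refine ⟨{k - 2}, .takeTwo (by omega), ?_⟩
    grind [evenCount_singleton, weight_singleton, level_singleton, heapWeight, heapLevel]
  by_cases hodd : k % 2 = 1
  · refine ⟨{k - 1}, .takeOne (by omega), ?_⟩
    grind [evenCount_singleton, weight_singleton, level_singleton, heapWeight, heapLevel]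
  · refine ⟨{3, k - 5}, .split (by omega) (by omega) (by omega), ?_⟩
    grind [evenCount_pair, weight_pair, level_pair, heapWeight, heapLevel]

lemma exists_heapMove_weight_zero (hk : 2 ≤ k) (hw : heapWeight k = 0) :
    ∃ S, HeapMove k S ∧ (evenCount S + (k + 1)) % 2 = 1 ∧ weight S = 0 := by
  have hcases : k = 2 ∨ k = 5 ∨ k = 6 := by grind [heapWeight]
  rcases hcases with rfl | rfl | rfl
  · exact ⟨{1}, .takeOne (by norm_num), by decide⟩
  · exact ⟨{1, 2}, .split (by norm_num) (by norm_num) rfl, by decide⟩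
  · exact ⟨{5}, .takeOne (by norm_num), by decide⟩

lemma exists_heapMove_isPTriple_of_even {e : ℕ} (hw : heapWeight k % 2 = 0)
    (hlt : heapWeight k < heapLevel k) (he : (k + 1 + e) % 2 = 0) :
    ∃ S, HeapMove k S ∧ IsPTriple (evenCount S + e) (weight S) (level S) := by
  by_cases hk : k = 9 ∨ k = 10 ∨ k = 14
  · obtain ⟨i, hi, hik⟩ : ∃ i, (i = 1 ∨ i = 2 ∨ i = 6) ∧ i + 6 + 2 = k :=
      ⟨k - 8, by omega, by omega⟩
    refine ⟨{i, 6}, .split (by omega) (by omega) hik, .inl ?_⟩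
    simp only [evenCount_pair, weight_pair]
    rcases hi with rfl | rfl | rfl <;> exact ⟨by omega, rfl⟩
  · have hk9 := nine_le_of_heapLevel_pos (Nat.zero_lt_of_lt hlt)
    refine ⟨{k - 2}, .takeTwo (by omega), .inr ?_⟩
    grind [IsPPair, evenCount_singleton, weight_singleton, level_singleton, heapWeight, heapLevel]

lemma exists_heapMove_isPTriple_of_odd {e : ℕ} (hw : heapWeight k % 2 = 0)
    (hlt : heapWeight k < heapLevel k) (he : (k + 1 + e) % 2 = 1) :
    ∃ S, HeapMove k S ∧ IsPTriple (evenCount S + e) (weight S) (level S) := by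
  have hk9 := nine_le_of_heapLevel_pos (Nat.zero_lt_of_lt hlt)
  by_cases hk : k = 9 ∨ k = 10 ∨ k = 13
  · obtain ⟨i, hi, hik⟩ : ∃ i, (i = 3 ∨ i = 4 ∨ i = 7) ∧ i + 4 + 2 = k :=
      ⟨k - 6, by omega, by omega⟩
    refine ⟨{i, 4}, .split (by omega) (by omega) hik, .inr ?_⟩
    simp only [evenCount_pair, weight_pair, level_pair]
    rcases hi with rfl | rfl | rfl <;> exact ⟨by omega, .inl (by decide)⟩
  by_cases hodd : k % 2 = 1
  · refine ⟨{k - 1}, .takeOne (by omega), .inr ?_⟩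
    grind [IsPPair, evenCount_singleton, weight_singleton, level_singleton, heapWeight, heapLevel]
  · refine ⟨{1, k - 3}, .split (by omega) (by omega) (by omega), .inr ?_⟩
    grind [IsPPair, evenCount_pair, weight_pair, level_pair, heapWeight, heapLevel]

lemma exists_heapMove_isPTriple (hw : heapWeight k % 2 = 0) (hlt : heapWeight k < heapLevel k)
    (e : ℕ) : ∃ S, HeapMove k S ∧ IsPTriple (evenCount S + e) (weight S) (level S) := by
  rcases Nat.mod_two_eq_zero_or_one (k + 1 + e) with he | he
  · exact exists_heapMove_isPTriple_of_even hw hlt he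
  · exact exists_heapMove_isPTriple_of_odd hw hlt he

lemma hasPOption_of_weight_eq_zero (hm : ∃ G', Move026 G G') (he : evenCount G % 2 = 0)
    (hw : weight G = 0) : HasPOption G := by
  obtain ⟨G', hm⟩ := hm
  obtain ⟨k, S, R, h, rfl, -⟩ := move026_iff.1 hm
  rw [evenCount_cons] at he
  rw [weight_cons] at hw
  obtain ⟨T, hT, heT, hwT⟩ := exists_heapMove_weight_zero h.two_le (by omega)
  exact hT.hasPOption (.inl (by omega))

lemma hasPOption_of_weight_odd_of_level_lt (hw : weight G % 2 = 1)
    (hM : level G < weight G) : HasPOption G := by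
  obtain ⟨k, R, rfl, hk⟩ := exists_cons_of_weight_pos (G := G) (by omega)
  rw [weight_cons] at hw hM
  rw [level_cons] at hM
  by_cases h1 : heapWeight k + weight R = 1
  · obtain ⟨S, hS, he, hwS, -⟩ := exists_heapMove_weight_pred hk (evenCount R + 1)
    exact hS.hasPOption (.inl (by omega))
  · obtain ⟨S, hS, he, hwS, hMS⟩ := exists_heapMove_weight_pred hk (evenCount R)
    exact hS.hasPOption (.inr ⟨he, .inl (by omega)⟩)

lemma hasPOption_of_weight_odd_of_level_eq (hw : weight G % 2 = 1)
    (hM : level G = weight G) : HasPOption G := by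
  obtain ⟨k, R, rfl, hMR⟩ := exists_cons_level_le (G := G) (by omega)
  rw [weight_cons] at hw hM
  rw [level_cons, max_eq_left hMR] at hM
  have hk : 0 < heapLevel k := by omega
  by_cases h12 : k = 12 ∧ evenCount R % 2 = 1
  · obtain ⟨rfl, he⟩ := h12
    have hR : weight R = 0 := (Nat.add_eq_left (a := heapWeight 12)).1 hM.symm
    refine (HeapMove.split (i := 5) (j := 5) (by norm_num) (by norm_num) rfl).hasPOption
      (.inl ?_)
    rw [evenCount_pair, weight_pair, hR]
    exact ⟨by omega, rfl⟩
  · obtain ⟨S, hS, he, hwS, hMS⟩ := exists_heapMove_weight_pred_level_lt (k := k)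
      (e := evenCount R) hk (by omega)
    have hMk := heapLevel_le k
    have hR := level_le R
    have hwk : 2 ≤ heapWeight k := by have := nine_le_of_heapLevel_pos hk; grind [heapWeight]
    exact hS.hasPOption (.inr ⟨he, .inl (by omega)⟩)

lemma hasPOption_of_weight_even_of_lt_level (hw : weight G % 2 = 0)
    (hM : weight G < level G) : HasPOption G := by
  obtain ⟨k, R, rfl, hMR⟩ := exists_cons_level_le (G := G) (by omega)
  rw [weight_cons] at hw hM
  rw [level_cons, max_eq_left hMR] at hM
  rcases Nat.eq_zero_or_pos (weight R) with hR | hR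
  · have hMR0 := level_eq_zero_of_weight_eq_zero hR
    rw [hR, add_zero] at hw hM
    obtain ⟨S, hS, hP⟩ := exists_heapMove_isPTriple hw hM (evenCount R)
    exact hS.hasPOption (by simpa [hR, hMR0] using hP)
  · obtain ⟨j, T, rfl, hj⟩ := exists_cons_of_weight_pos hR
    obtain ⟨S, hS, he, hwS, hMS⟩ := exists_heapMove_weight_pred hj (evenCount (k ::ₘ T))
    rw [weight_cons] at hw hM
    rw [Multiset.cons_swap]
    refine hS.hasPOption (.inr ⟨he, .inr ?_⟩)
    rw [weight_cons, level_cons]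
    omega

lemma heapWeight_sub_one_of_even (hk : k % 2 = 0) : heapWeight (k - 1) = heapWeight k := by
  grind [heapWeight]

lemma heapLevel_sub_one_of_even (hk : k % 2 = 0) (hk12 : k < 12) :
    heapLevel (k - 1) = heapLevel k := by
  grind [heapLevel]

lemma isPPair_sub_one_or_sub_four {w M : ℕ} (hk : k % 2 = 0) (hk12 : 12 ≤ k)
    (hM : M ≤ 2 * w - 1) (h : IsPPair (heapWeight k + w) (max (heapLevel k) M)) :
    IsPPair (heapWeight (k - 1) + w) (max (heapLevel (k - 1)) M) ∨
      IsPPair (heapWeight (k - 4) + w) (max (heapLevel (k - 4)) M) := by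
  have hw : heapWeight (k - 4) + 2 = heapWeight k := by grind [heapWeight]
  have hkM : heapLevel k + 3 = 2 * heapWeight k := by grind [heapWeight, heapLevel]
  have hM1 : heapLevel (k - 1) = heapLevel k + 2 := by grind [heapLevel]
  have hM4 : heapLevel (k - 4) + 2 ≤ heapLevel k := by grind [heapLevel]
  rw [heapWeight_sub_one_of_even hk, hM1]
  unfold IsPPair at *
  omega

lemma hasPOption_of_evenCount_odd (hpos : ∀ k ∈ G, 1 ≤ k) (he : evenCount G % 2 = 1)
    (hP : IsPPair (weight G) (level G)) : HasPOption G := by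
  obtain ⟨k, R, rfl, hk⟩ := exists_cons_of_evenCount_odd he
  have hk2 : 2 ≤ k := by have := hpos k (Multiset.mem_cons_self k R); omega
  rw [evenCount_cons] at he
  rw [weight_cons, level_cons] at hP
  by_cases h1 : IsPPair (heapWeight (k - 1) + weight R) (max (heapLevel (k - 1)) (level R))
  · refine (HeapMove.takeOne hk2).hasPOption (.inr ⟨?_, ?_⟩)
    · rw [evenCount_singleton]
      omega
    · rwa [weight_singleton, level_singleton]
  · have hk12 : 12 ≤ k := by
      by_contra! hk12
      exact h1 (by rwa [heapWeight_sub_one_of_even hk, heapLevel_sub_one_of_even hk hk12])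
    have h4 := (isPPair_sub_one_or_sub_four hk hk12 (level_le R) hP).resolve_left h1
    refine (HeapMove.split (i := 2) (j := k - 4) (by omega) (by omega)
      (by omega)).hasPOption (.inr ⟨?_, ?_⟩)
    · rw [evenCount_pair]
      omega
    · rw [weight_pair, level_pair, show heapWeight 2 = 0 from rfl, show heapLevel 2 = 0 from rfl,
        zero_add, Nat.zero_max]
      exact h4

theorem hasPOption_of_not_isPValue (hpos : ∀ k ∈ G, 1 ≤ k) (hm : ∃ G', Move026 G G')
    (hG : ¬ IsPValue G) : HasPOption G := by
  by_cases hP : IsPPair (weight G) (level G)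
  · have he : evenCount G % 2 = 1 := Nat.mod_two_ne_zero.1 fun he => hG (.inr ⟨he, hP⟩)
    exact hasPOption_of_evenCount_odd hpos he hP
  unfold IsPValue IsPTriple at hG
  unfold IsPPair at hP
  rcases Nat.eq_zero_or_pos (weight G) with hw | hw
  · exact hasPOption_of_weight_eq_zero hm (by omega) hw
  rcases lt_trichotomy (level G) (weight G) with hlt | heq | hgt
  · exact hasPOption_of_weight_odd_of_level_lt (by omega) hlt
  · exact hasPOption_of_weight_odd_of_level_eq (by omega) heq
  · exact hasPOption_of_weight_even_of_lt_level (by omega) hgt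

theorem IsPValue.exists_move026 (hpos : ∀ k ∈ G, 1 ≤ k) (hG : IsPValue G) :
    ∃ G', Move026 G G' := by
  rcases Nat.eq_zero_or_pos (weight G) with hw | hw
  · have he : evenCount G % 2 = 1 := by
      unfold IsPValue IsPTriple IsPPair at hG
      omega
    obtain ⟨k, R, rfl, hk⟩ := exists_cons_of_evenCount_odd he
    have := hpos k (Multiset.mem_cons_self k R)
    exact ⟨_, (HeapMove.takeOne (by omega)).move026_cons R⟩
  · obtain ⟨k, R, rfl, hk⟩ := exists_cons_of_weight_pos hw
    obtain ⟨S, hS, -⟩ := exists_heapMove_weight_pred hk 0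
    exact ⟨_, hS.move026_cons R⟩

theorem misereRecursion_isPValue (hpos : ∀ k ∈ G, 1 ≤ k) :
    MisereRecursion Move026 IsPValue G := by
  refine ⟨fun hG => ⟨hG.exists_move026 hpos, fun G' => hG.not_isPValue_of_move026⟩, ?_⟩
  rintro ⟨hm, hN⟩
  by_contra hG
  obtain ⟨G', hm', hG'⟩ := hasPOption_of_not_isPValue hpos hm hG
  exact hN G' hm' hG'

/-! ### A numerical model of `Q` -/

/-- A numerical model for `Q`: the parity of the exponent of `a`, the weight, and the level as far
as it exceeds the weight, encoded as the maximum of the two. -/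
@[ext]
structure Signature where
  parity : ℕ
  weight : ℕ
  height : ℕ
  parity_lt : parity < 2
  weight_le : weight ≤ height

namespace Signature

/-- The signature of a product of generators with exponent `e` of `a`, weight `w` and level `M`. -/
def of (e w M : ℕ) : Signature := ⟨e % 2, w, max M w, by omega, by omega⟩

instance : One Signature := ⟨of 0 0 0⟩

instance : Mul Signature :=
  ⟨fun s t => of (s.parity + t.parity) (s.weight + t.weight) (max s.height t.height)⟩

lemma one_def : (1 : Signature) = of 0 0 0 := rfl

lemma mul_def (s t : Signature) :
    s * t = of (s.parity + t.parity) (s.weight + t.weight) (max s.height t.height) := rfl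

lemma of_eq_of_iff {e w M e' w' M' : ℕ} :
    of e w M = of e' w' M' ↔ e % 2 = e' % 2 ∧ w = w' ∧ max M w = max M' w' := by
  simp [of]

lemma of_mul_of (e w M e' w' M' : ℕ) :
    of e w M * of e' w' M' = of (e + e') (w + w') (max M M') := by
  rw [mul_def, of_eq_of_iff]
  dsimp only [of]
  omega

lemma exists_eq_of (s : Signature) : ∃ e w M, s = of e w M :=
  ⟨s.parity, s.weight, s.height, by
    ext <;> simp [of, Nat.mod_eq_of_lt s.parity_lt, s.weight_le]⟩

instance : CommMonoid Signature where
  mul_assoc s t u := by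
    obtain ⟨_, _, _, rfl⟩ := s.exists_eq_of
    obtain ⟨_, _, _, rfl⟩ := t.exists_eq_of
    obtain ⟨_, _, _, rfl⟩ := u.exists_eq_of
    simp only [of_mul_of, add_assoc, max_assoc]
  one_mul s := by
    obtain ⟨_, _, _, rfl⟩ := s.exists_eq_of
    rw [one_def, of_mul_of, zero_add, zero_add, Nat.zero_max]
  mul_one s := by
    obtain ⟨_, _, _, rfl⟩ := s.exists_eq_of
    rw [one_def, of_mul_of, add_zero, add_zero, Nat.max_zero]
  mul_comm s t := by rw [mul_def, mul_def, add_comm, add_comm s.weight, max_comm]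

lemma of_pow (e w m : ℕ) : of e w 0 ^ m = of (m * e) (m * w) 0 := by
  induction m with
  | zero => simp [one_def]
  | succ m ih => rw [pow_succ, ih, of_mul_of, max_self, Nat.succ_mul, Nat.succ_mul]

end Signature

open Signature (of of_pow of_mul_of of_eq_of_iff one_def)

/-- The signature of a generator. -/
def genSignature : Gen026 → Signature
  | .a => .of 1 0 0
  | .b => .of 0 1 0
  | .c n => .of 0 (n + 2) (2 * n + 3)

/-- The signature of a word, as the homomorphism extending `genSignature`. -/
def wordSignature : FM026 →* Signature where
  toFun x := (x.toAdd.map genSignature).prod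
  map_one' := by simp
  map_mul' x y := by simp

lemma wordSignature_fgen026 (g : Gen026) : wordSignature (fgen026 g) = genSignature g := by
  change (Multiset.map genSignature {g}).prod = _
  rw [Multiset.map_singleton, Multiset.prod_singleton]

lemma wordSignature_fa : wordSignature fa = of 1 0 0 := wordSignature_fgen026 .a

lemma wordSignature_fb : wordSignature fb = of 0 1 0 := wordSignature_fgen026 .b

lemma wordSignature_fc (n : ℕ) : wordSignature (fc n) = of 0 (n + 2) (2 * n + 3) :=
  wordSignature_fgen026 (.c n)

lemma wordSignature_eq_of_rel026 {x y : FM026} (h : rel026 x y) :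
    wordSignature x = wordSignature y := by
  rcases h with ⟨rfl, rfl⟩ | ⟨n, rfl, rfl⟩ | ⟨m, n, hmn, rfl, rfl⟩
  · rw [map_pow, map_one, wordSignature_fa, of_pow, one_def, of_eq_of_iff]
    omega
  · rw [map_mul, map_pow, map_pow, wordSignature_fb, wordSignature_fc, of_pow, of_pow, of_mul_of,
      of_eq_of_iff]
    omega
  · rw [map_mul, map_mul, map_pow, wordSignature_fb, wordSignature_fc, wordSignature_fc, of_pow,
      of_mul_of, of_mul_of, of_eq_of_iff]
    omega

/-- The homomorphism from `Q` to its numerical model. -/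
def signature : Q026 →* Signature :=
  (conGen rel026).lift wordSignature <|
    Con.conGen_le.2 fun _ _ => wordSignature_eq_of_rel026

lemma signature_qa : signature qa = of 1 0 0 := wordSignature_fa

lemma signature_qb : signature qb = of 0 1 0 := wordSignature_fb

lemma signature_qc (n : ℕ) : signature (qc n) = of 0 (n + 2) (2 * n + 3) := wordSignature_fc n

lemma signature_qa_pow_mul_qb_pow (e w : ℕ) : signature (qa ^ e * qb ^ w) = of e w 0 := by
  simp [signature_qa, signature_qb, of_pow, of_mul_of]

lemma signature_qa_pow_mul_qb_pow_mul_qc (e m n : ℕ) :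
    signature (qa ^ e * (qb ^ m * qc n)) = of e (m + (n + 2)) (2 * n + 3) := by
  simp [signature_qa, signature_qb, signature_qc, of_pow, of_mul_of]

/-! ### Normal forms in `Q` -/

lemma mk'_eq_of_rel026 {x y : FM026} (h : rel026 x y) :
    (conGen rel026).mk' x = (conGen rel026).mk' y :=
  (Con.eq _).2 (ConGen.Rel.of _ _ h)

lemma qa_sq : qa ^ 2 = 1 := mk'_eq_of_rel026 (.inl ⟨rfl, rfl⟩)

lemma qb_pow_succ_mul_qc (n : ℕ) : qb ^ (n + 1) * qc n = qb ^ (2 * n + 3) :=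
  mk'_eq_of_rel026 (.inr (.inl ⟨n, rfl, rfl⟩))

lemma qc_mul_qc {m n : ℕ} (h : m ≤ n) : qc m * qc n = qb ^ (m + 2) * qc n :=
  mk'_eq_of_rel026 (.inr (.inr ⟨m, n, h, rfl, rfl⟩))

lemma qb_pow_mul_qc_of_lt {p n : ℕ} (h : n < p) : qb ^ p * qc n = qb ^ (p + n + 2) := by
  obtain ⟨d, rfl⟩ := Nat.exists_eq_add_of_lt h
  calc qb ^ (n + d + 1) * qc n = qb ^ d * (qb ^ (n + 1) * qc n) := by
        rw [← mul_assoc, ← pow_add]; congr 2; omega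
    _ = qb ^ (n + d + 1 + n + 2) := by
        rw [qb_pow_succ_mul_qc, ← pow_add]; congr 1; omega

lemma qa_pow_of_even {e : ℕ} (h : e % 2 = 0) : qa ^ e = 1 := by
  rw [pow_eq_pow_mod e qa_sq, h, pow_zero]

lemma qa_pow_of_odd {e : ℕ} (h : e % 2 = 1) : qa ^ e = qa := by
  rw [pow_eq_pow_mod e qa_sq, h, pow_one]

lemma Q026_induction {p : Q026 → Prop} (one : p 1) (qa_mul : ∀ x, p x → p (qa * x))
    (qb_mul : ∀ x, p x → p (qb * x)) (qc_mul : ∀ n x, p x → p (qc n * x)) (x : Q026) : p x := by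
  obtain ⟨s, rfl⟩ := Con.mk'_surjective x
  change p ((conGen rel026).mk' (.ofAdd (Multiplicative.toAdd s)))
  induction Multiplicative.toAdd s using Multiset.induction_on with
  | empty => exact one
  | cons g s ih =>
    rw [← Multiset.singleton_add, ofAdd_add, map_mul]
    cases g with
    | a => exact qa_mul _ ih
    | b => exact qb_mul _ ih
    | c n => exact qc_mul n _ ih

/-- The normal forms of `Q`; the exponent of `a` is only determined modulo `2`. -/
inductive IsNormal : Q026 → Prop
  | qb_pow (e w : ℕ) : IsNormal (qa ^ e * qb ^ w)
  | qb_pow_mul_qc (e : ℕ) {m n : ℕ} (h : m ≤ n) : IsNormal (qa ^ e * (qb ^ m * qc n))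

lemma isNormal_qb_pow_mul_qc (e p n : ℕ) : IsNormal (qa ^ e * (qb ^ p * qc n)) := by
  rcases le_or_gt p n with h | h
  · exact .qb_pow_mul_qc e h
  · rw [qb_pow_mul_qc_of_lt h]
    exact .qb_pow e _

lemma isNormal_qb_pow_mul_qc_mul_qc (e p : ℕ) {m n : ℕ} (h : m ≤ n) :
    IsNormal (qa ^ e * (qb ^ p * (qc m * qc n))) := by
  rw [qc_mul_qc h, ← mul_assoc (qb ^ p), ← pow_add]
  exact isNormal_qb_pow_mul_qc e _ n

lemma isNormal (x : Q026) : IsNormal x := by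
  induction x using Q026_induction with
  | one => simpa using IsNormal.qb_pow 0 0
  | qa_mul x ih =>
    rcases ih with ⟨e, w⟩ | ⟨e, h⟩ <;> rw [← mul_assoc, ← pow_succ']
    · exact .qb_pow _ w
    · exact .qb_pow_mul_qc _ h
  | qb_mul x ih =>
    rcases ih with ⟨e, w⟩ | ⟨e, h⟩ <;> rw [mul_left_comm]
    · rw [← pow_succ']
      exact .qb_pow e _
    · rw [← mul_assoc qb, ← pow_succ']
      exact isNormal_qb_pow_mul_qc e _ _
  | qc_mul l x ih =>
    rcases ih with ⟨e, w⟩ | @⟨e, m, n, -⟩ <;> rw [mul_left_comm]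
    · rw [mul_comm (qc l)]
      exact isNormal_qb_pow_mul_qc e w l
    · rw [mul_left_comm (qc l)]
      rcases le_total l n with h | h
      · exact isNormal_qb_pow_mul_qc_mul_qc e m h
      · rw [mul_comm (qc l)]
        exact isNormal_qb_pow_mul_qc_mul_qc e m h

/-! ### The P-portion -/

lemma isPTriple_congr {e w M e' w' M' : ℕ} (h : of e w M = of e' w' M') :
    IsPTriple e w M ↔ IsPTriple e' w' M' := by
  rw [of_eq_of_iff] at h
  unfold IsPTriple IsPPair
  omega

lemma isPTriple_of_mem_P026 {x : Q026} (hx : x ∈ P026) {e w M : ℕ} (h : signature x = of e w M) :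
    IsPTriple e w M := by
  rcases hx with (rfl | ⟨m, hm, rfl⟩) | ⟨m, n, hmn, hodd, rfl⟩
  · rw [signature_qa] at h
    exact (isPTriple_congr h).1 (.inl ⟨rfl, rfl⟩)
  · have := signature_qa_pow_mul_qb_pow 0 (2 * m)
    rw [pow_zero, one_mul, h] at this
    exact (isPTriple_congr this).2 (.inr ⟨rfl, .inl (by omega)⟩)
  · have := signature_qa_pow_mul_qb_pow_mul_qc 0 m n
    rw [pow_zero, one_mul, h] at this
    exact (isPTriple_congr this).2 (.inr ⟨rfl, .inr (by omega)⟩)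

lemma qa_pow_mul_qb_pow_mem_P026 {e w : ℕ} (h : IsPTriple e w 0) : qa ^ e * qb ^ w ∈ P026 := by
  rcases h with ⟨he, rfl⟩ | ⟨he, ⟨hw, hw0, -⟩ | ⟨-, hw⟩⟩
  · exact .inl (.inl (by rw [qa_pow_of_odd he, pow_zero, mul_one]; rfl))
  · refine .inl (.inr ⟨w / 2, by omega, ?_⟩)
    rw [qa_pow_of_even he, one_mul, Nat.mul_div_cancel' (Nat.dvd_of_mod_eq_zero hw)]
  · omega

lemma qa_pow_mul_qb_pow_mul_qc_mem_P026 {e m n : ℕ} (hmn : m ≤ n)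
    (h : IsPTriple e (m + (n + 2)) (2 * n + 3)) : qa ^ e * (qb ^ m * qc n) ∈ P026 := by
  rcases h with ⟨-, hw⟩ | ⟨he, ⟨-, -, hM⟩ | ⟨hw, -⟩⟩
  · omega
  · omega
  · exact .inr ⟨m, n, hmn, by omega, by rw [qa_pow_of_even he, one_mul]⟩

theorem mem_P026_iff {x : Q026} {e w M : ℕ} (h : signature x = of e w M) :
    x ∈ P026 ↔ IsPTriple e w M := by
  refine ⟨fun hx => isPTriple_of_mem_P026 hx h, fun hP => ?_⟩
  cases isNormal x with
  | qb_pow e' w' =>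
    rw [signature_qa_pow_mul_qb_pow] at h
    exact qa_pow_mul_qb_pow_mem_P026 ((isPTriple_congr h).2 hP)
  | qb_pow_mul_qc e' hmn =>
    rw [signature_qa_pow_mul_qb_pow_mul_qc] at h
    exact qa_pow_mul_qb_pow_mul_qc_mem_P026 hmn ((isPTriple_congr h).2 hP)

lemma signature_phi026 (hk : 1 ≤ k) :
    signature (phi026 k) = of (k + 1) (heapWeight k) (heapLevel k) := by
  unfold phi026 heapWeight heapLevel
  split_ifs <;>
    simp only [map_mul, map_one, signature_qa, signature_qb, signature_qc, one_def, of_mul_of,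
      of_eq_of_iff] <;>
    omega

lemma signature_Phi026 (hpos : ∀ k ∈ G, 1 ≤ k) :
    signature (Phi026 G) = of (evenCount G) (weight G) (level G) := by
  induction G using Multiset.induction_on with
  | empty => rfl
  | cons k G ih =>
    rw [Multiset.forall_mem_cons] at hpos
    have hcons : Phi026 (k ::ₘ G) = phi026 k * Phi026 G := by simp [Phi026]
    rw [hcons, map_mul, signature_phi026 hpos.1, ih hpos.2, of_mul_of, of_eq_of_iff,
      evenCount_cons, weight_cons, level_cons]
    omega

theorem Phi026_mem_P026_iff (hpos : ∀ k ∈ G, 1 ≤ k) : Phi026 G ∈ P026 ↔ IsPValue G :=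
  mem_P026_iff (signature_Phi026 hpos)

end Octal026

/-- For every position `G` of 0.26 (a finite multiset of positive heap sizes,
including the empty position), `G` is a misère P-position iff `Φ(G) ∈ P`.
Here `PP` is the misère P-position predicate, characterized recursively: a
position is a P-position iff it has at least one option and all options are
N-positions. -/
theorem phi026_correct
    (PP : Multiset ℕ → Prop)
    (hPP : ∀ G : Multiset ℕ,
      PP G ↔ ((∃ G', Move026 G G') ∧ ∀ G', Move026 G G' → ¬ PP G'))
    (G : Multiset ℕ) (hpos : ∀ k ∈ G, 1 ≤ k) :
    PP G ↔ Phi026 G ∈ P026 := by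
  rw [Octal026.Phi026_mem_P026_iff hpos]
  exact MisereRecursion.unique Octal026.wellFounded_flip_move026
    (fun _ _ => Octal026.pos_of_move026) (fun G _ => hPP G)
    (fun _ => Octal026.misereRecursion_isPValue) hpos
end

section
/- Writing c_∞ for the identity element 1, every element of the monoid Q associated to the game 0.26 can be written uniquely in the form a^i b^m c_n, where i ∈ {0,1}, m ∈ ℕ, n ∈ ℕ ∪ {∞}, and m ≤ n. -/
/-- `c_n` for `n ∈ ℕ ∪ {∞}`, where `c_∞` denotes the identity element `1`. -/
noncomputable def qcE : ℕ∞ → Q026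
  | ⊤ => 1
  | (n : ℕ) => qc n

/-!
Words reduce to `a^i b^m c_n` with `m ≤ n` because `c_k c_n = b^(k+2) c_n` for `k ≤ n` merges the
letters `c`, and a surviving `c_n` is absorbed by `b^m` as soon as `m > n`.

For uniqueness, cancelling `b^(n+1)` in `b^(n+1) c_n = b^(2n+3)` suggests to let `b` weigh `1` and
`c_n` weigh `n + 2`; all relations preserve the parity in `a` and the weight. These forget the
index `n`, which matters only as long as `c_n` is not absorbed into a power of `b`, and absorption
happens at weight `2n + 3`. Hence the maximum of the weight of a word and the numbers `2n + 3` over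
its letters `c_n` is invariant as well. On `a^i b^m c_n` with `m ≤ n < ∞` it equals `2n + 3`, which
exceeds the weight `m + n + 2`; on `a^i b^m` it equals the weight `m`. So the three invariants
determine `i`, `m` and `n`.
-/

section SupCongruence

variable {M P B : Type*} [Mul M] [Mul P] [SemilatticeSup B]
  (f : M →ₙ* P) {s : M → B} {θ : P → B}

theorem sup_floor_mul (hs : ∀ x y, s (x * y) = s x ⊔ s y) (hθ : ∀ p q, θ p ⊔ θ q ≤ θ (p * q))
    (x y : M) :
    s (x * y) ⊔ θ (f (x * y)) = (s x ⊔ θ (f x)) ⊔ (s y ⊔ θ (f y)) ⊔ θ (f x * f y) := by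
  rw [hs, map_mul, sup_sup_sup_comm, sup_assoc (s x ⊔ s y), sup_eq_right.2 (hθ _ _)]

/-- The congruence identifying elements with the same grade `f` and the same value of `s`, where
values of `s` below the floor `θ` prescribed by the grade are not distinguished. -/
def supFloorCon (hs : ∀ x y, s (x * y) = s x ⊔ s y) (hθ : ∀ p q, θ p ⊔ θ q ≤ θ (p * q)) :
    Con M where
  toSetoid := Setoid.ker fun x => (f x, s x ⊔ θ (f x))
  mul' {w x y z} hwx hyz := by
    simp only [Setoid.ker_def, Prod.mk.injEq] at hwx hyz ⊢
    exact ⟨by rw [map_mul, map_mul, hwx.1, hyz.1],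
      by rw [sup_floor_mul f hs hθ, sup_floor_mul f hs hθ, hwx.2, hyz.2, hwx.1, hyz.1]⟩

end SupCongruence

namespace Q026

theorem qa_sq : qa ^ 2 = 1 :=
  (Con.eq _).2 (ConGen.Rel.of _ _ (Or.inl ⟨rfl, rfl⟩))

theorem qb_pow_mul_qc (n : ℕ) : qb ^ (n + 1) * qc n = qb ^ (2 * n + 3) :=
  (Con.eq _).2 (ConGen.Rel.of _ _ (Or.inr (Or.inl ⟨n, rfl, rfl⟩)))

theorem qc_mul_qc {m n : ℕ} (h : m ≤ n) : qc m * qc n = qb ^ (m + 2) * qc n :=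
  (Con.eq _).2 (ConGen.Rel.of _ _ (Or.inr (Or.inr ⟨m, n, h, rfl, rfl⟩)))

theorem qcE_top : qcE ⊤ = 1 := rfl

theorem qcE_coe (n : ℕ) : qcE n = qc n := rfl

theorem induction_on {motive : Q026 → Prop} (x : Q026) (one : motive 1)
    (qa_mul : ∀ x, motive x → motive (qa * x)) (qb_mul : ∀ x, motive x → motive (qb * x))
    (qc_mul : ∀ n x, motive x → motive (qc n * x)) : motive x := by
  obtain ⟨w, rfl⟩ := (conGen rel026).mk'_surjective x
  induction w using Multiset.induction_on with
  | empty => exact one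
  | cons g w ih =>
    cases g with
    | a => exact qa_mul _ ih
    | b => exact qb_mul _ ih
    | c n => exact qc_mul n _ ih

/-- The element `a^i b^m c_n` of `Q`, with no constraint between `m` and `n`. -/
noncomputable def monomial (i m : ℕ) (n : ℕ∞) : Q026 := qa ^ i * qb ^ m * qcE n

theorem monomial_mod_two (i m : ℕ) (n : ℕ∞) :
    monomial (i % 2) m n = monomial i m n := by
  rw [monomial, monomial, ← pow_eq_pow_mod i qa_sq]

theorem monomial_eq_of_lt (i : ℕ) {m n : ℕ} (h : n < m) :
    monomial i m n = monomial i (m + n + 2) ⊤ := by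
  obtain ⟨d, rfl⟩ := Nat.exists_eq_add_of_le' (Nat.succ_le_of_lt h)
  have absorb : qb ^ (d + (n + 1)) * qc n = qb ^ (d + (n + 1) + n + 2) := by
    rw [pow_add, mul_assoc, qb_pow_mul_qc, ← pow_add]
    congr 1
    ring
  rw [monomial, monomial, qcE_coe, qcE_top, mul_one, mul_assoc, absorb]

theorem qa_mul_monomial (i m : ℕ) (n : ℕ∞) :
    qa * monomial i m n = monomial (i + 1) m n := by
  simp only [monomial, pow_succ', mul_assoc]

theorem qb_pow_mul_monomial (k i m : ℕ) (n : ℕ∞) :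
    qb ^ k * monomial i m n = monomial i (k + m) n := by
  simp only [monomial, pow_add, mul_assoc, mul_left_comm (qb ^ k)]

theorem exists_qc_mul_qcE_eq (k : ℕ) (n : ℕ∞) :
    ∃ (j : ℕ) (l : ℕ∞), qc k * qcE n = qb ^ j * qcE l := by
  induction n using ENat.recTopCoe with
  | top => exact ⟨0, k, by rw [qcE_top, qcE_coe, mul_one, pow_zero, one_mul]⟩
  | coe n =>
    rcases le_total k n with hkn | hnk
    · exact ⟨k + 2, n, qc_mul_qc hkn⟩
    · exact ⟨n + 2, k, (mul_comm _ _).trans (qc_mul_qc hnk)⟩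

theorem exists_eq_monomial (x : Q026) : ∃ i m n, x = monomial i m n := by
  induction x using Q026.induction_on with
  | one => exact ⟨0, 0, ⊤, by simp only [monomial, pow_zero, mul_one, qcE_top]⟩
  | qa_mul x ih =>
    obtain ⟨i, m, n, rfl⟩ := ih
    exact ⟨i + 1, m, n, qa_mul_monomial i m n⟩
  | qb_mul x ih =>
    obtain ⟨i, m, n, rfl⟩ := ih
    exact ⟨i, 1 + m, n, by rw [← qb_pow_mul_monomial, pow_one]⟩
  | qc_mul k x ih =>
    obtain ⟨i, m, n, rfl⟩ := ih
    obtain ⟨j, l, hjl⟩ := exists_qc_mul_qcE_eq k n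
    refine ⟨i, j + m, l, ?_⟩
    rw [← qb_pow_mul_monomial, monomial, monomial, mul_left_comm, hjl, mul_left_comm]

theorem exists_eq_monomial_of_le (x : Q026) :
    ∃ (i : Fin 2) (m : ℕ) (n : ℕ∞), (m : ℕ∞) ≤ n ∧ x = monomial i m n := by
  obtain ⟨i, m, n, rfl⟩ := exists_eq_monomial x
  rcases le_or_gt (m : ℕ∞) n with hmn | hnm
  · exact ⟨Fin.ofNat 2 i, m, n, hmn, (monomial_mod_two i m n).symm⟩
  · lift n to ℕ using hnm.ne_top
    refine ⟨Fin.ofNat 2 i, m + n + 2, ⊤, le_top, ?_⟩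
    rw [monomial_eq_of_lt i (Nat.cast_lt.1 hnm)]
    exact (monomial_mod_two _ _ _).symm

/-- Parity in `a` and weight of a letter. -/
def letterGrade : Gen026 → ZMod 2 × ℕ
  | .a => (1, 0)
  | .b => (0, 1)
  | .c n => (0, n + 2)

/-- The weight `2n + 3` from which on `c_n` is absorbed into a power of `b`; it is `0` for the
letters `a` and `b`, to which absorption does not apply. -/
def letterAbsorption : Gen026 → ℕ
  | .c n => 2 * n + 3
  | _ => 0

/-- Parity in `a` and weight of a word. -/
def grade : FM026 →* Multiplicative (ZMod 2 × ℕ) :=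
  AddMonoidHom.toMultiplicative
    (Multiset.sumAddMonoidHom.comp (Multiset.mapAddMonoidHom letterGrade))

/-- The weight from which on all letters `c_n` of a word are absorbed. -/
def absorption (w : FM026) : ℕ := (w.toAdd.map letterAbsorption).sup

theorem grade_fa : grade fa = .ofAdd (1, 0) := rfl

theorem grade_fb : grade fb = .ofAdd (0, 1) := rfl

theorem grade_fb_pow (k : ℕ) : grade (fb ^ k) = .ofAdd (0, k) := by
  rw [map_pow, grade_fb, ← ofAdd_nsmul, Prod.smul_mk, smul_zero, smul_eq_mul, mul_one]

theorem grade_fc (n : ℕ) : grade (fc n) = .ofAdd (0, n + 2) := rfl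

theorem absorption_one : absorption 1 = 0 := rfl

theorem absorption_fa : absorption fa = 0 := rfl

theorem absorption_fb : absorption fb = 0 := rfl

theorem absorption_fc (n : ℕ) : absorption (fc n) = 2 * n + 3 := Multiset.sup_singleton

theorem absorption_mul (v w : FM026) : absorption (v * w) = absorption v ⊔ absorption w := by
  simp only [absorption, toAdd_mul, Multiset.map_add, Multiset.sup_add]

theorem absorption_pow_eq_zero {w : FM026} (h : absorption w = 0) (k : ℕ) :
    absorption (w ^ k) = 0 := by
  induction k with
  | zero => rw [pow_zero, absorption_one]
  | succ k ih => rw [pow_succ, absorption_mul, ih, h, max_self]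

/-- The third invariant of words, besides parity and weight: absorption, with values up to the
weight not distinguished. -/
def height (w : FM026) : ℕ := absorption w ⊔ (grade w).toAdd.2

/-- The lift of `a^i b^m c_n` to the free commutative monoid. -/
def word (i m : ℕ) : ℕ∞ → FM026
  | ⊤ => fa ^ i * fb ^ m
  | (n : ℕ) => fa ^ i * fb ^ m * fc n

theorem word_top (i m : ℕ) : word i m ⊤ = fa ^ i * fb ^ m := rfl

theorem word_coe (i m n : ℕ) : word i m n = word i m ⊤ * fc n := rfl

theorem mk'_word (i m : ℕ) (n : ℕ∞) : (conGen rel026).mk' (word i m n) = monomial i m n := by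
  induction n using ENat.recTopCoe with
  | top => exact (mul_one _).symm
  | coe n => rfl

theorem grade_word_top (i m : ℕ) : grade (word i m ⊤) = .ofAdd ((i : ZMod 2), m) := by
  rw [word_top, map_mul, map_pow, grade_fa, grade_fb_pow, ← ofAdd_nsmul, ← ofAdd_add]
  simp

theorem grade_word_coe (i m n : ℕ) :
    grade (word i m n) = .ofAdd ((i : ZMod 2), m + n + 2) := by
  rw [word_coe, map_mul, grade_word_top, grade_fc, ← ofAdd_add, Prod.mk_add_mk, add_zero, add_assoc]

theorem absorption_word_top (i m : ℕ) : absorption (word i m ⊤) = 0 := by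
  rw [word_top, absorption_mul, absorption_pow_eq_zero absorption_fa,
    absorption_pow_eq_zero absorption_fb, max_self]

theorem absorption_word_coe (i m n : ℕ) : absorption (word i m n) = 2 * n + 3 := by
  rw [word_coe, absorption_mul, absorption_word_top, absorption_fc, Nat.zero_max]

theorem height_word_top (i m : ℕ) : height (word i m ⊤) = m := by
  rw [height, absorption_word_top, grade_word_top, Nat.zero_max, toAdd_ofAdd]

theorem height_word_coe (i : ℕ) {m n : ℕ} (h : m ≤ n) : height (word i m n) = 2 * n + 3 := by
  rw [height, absorption_word_coe, grade_word_coe, toAdd_ofAdd]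
  exact max_eq_left (by omega)

/-- Equality of parity, weight and height as a congruence on words. -/
def invariantCon : Con FM026 :=
  supFloorCon (θ := fun g : Multiplicative (ZMod 2 × ℕ) => g.toAdd.2) grade.toMulHom absorption_mul
    fun _ _ => max_le (Nat.le_add_right _ _) (Nat.le_add_left _ _)

theorem invariantCon_iff {v w : FM026} :
    invariantCon v w ↔ grade v = grade w ∧ height v = height w :=
  Prod.mk_inj

theorem conGen_rel026_le_invariantCon : conGen rel026 ≤ invariantCon := by
  refine Con.conGen_le.2 fun v w hvw => invariantCon_iff.2 ?_
  rcases hvw with ⟨rfl, rfl⟩ | ⟨n, rfl, rfl⟩ | ⟨m, n, hmn, rfl, rfl⟩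
  · exact ⟨rfl, rfl⟩
  · have hgrade : grade (fb ^ (n + 1) * fc n) = grade (fb ^ (2 * n + 3)) := by
      rw [map_mul, grade_fb_pow, grade_fb_pow, grade_fc, ← ofAdd_add, Prod.mk_add_mk, add_zero]
      congr 2
      ring
    refine ⟨hgrade, ?_⟩
    rw [height, height, hgrade, absorption_mul, absorption_pow_eq_zero absorption_fb,
      absorption_pow_eq_zero absorption_fb, absorption_fc, grade_fb_pow, toAdd_ofAdd,
      Nat.zero_max, max_self]
  · have hgrade : grade (fc m * fc n) = grade (fb ^ (m + 2) * fc n) := by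
      rw [map_mul, map_mul, grade_fb_pow, grade_fc]
    have habsorption : absorption (fc m * fc n) = absorption (fb ^ (m + 2) * fc n) := by
      rw [absorption_mul, absorption_mul, absorption_pow_eq_zero absorption_fb, absorption_fc,
        absorption_fc]
      omega
    exact ⟨hgrade, by rw [height, height, hgrade, habsorption]⟩

theorem eq_of_invariantCon_word_top {i i' m m' : ℕ}
    (h : invariantCon (word i m ⊤) (word i' m' ⊤)) : (i : ZMod 2) = i' ∧ m = m' := by
  have hgrade := (invariantCon_iff.1 h).1
  rwa [grade_word_top, grade_word_top, Multiplicative.ofAdd.injective.eq_iff,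
    Prod.mk_inj] at hgrade

theorem not_invariantCon_word_top_coe {i i' m m' n : ℕ} (hmn : m' ≤ n) :
    ¬ invariantCon (word i m ⊤) (word i' m' n) := by
  intro h
  obtain ⟨hgrade, hheight⟩ := invariantCon_iff.1 h
  rw [grade_word_top, grade_word_coe, Multiplicative.ofAdd.injective.eq_iff,
    Prod.mk_inj] at hgrade
  rw [height_word_top, height_word_coe i' hmn] at hheight
  omega

theorem eq_of_invariantCon_word_coe {i i' m m' n n' : ℕ} (hmn : m ≤ n) (hmn' : m' ≤ n')
    (h : invariantCon (word i m n) (word i' m' n')) :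
    (i : ZMod 2) = i' ∧ m = m' ∧ n = n' := by
  obtain ⟨hgrade, hheight⟩ := invariantCon_iff.1 h
  rw [grade_word_coe, grade_word_coe, Multiplicative.ofAdd.injective.eq_iff,
    Prod.mk_inj] at hgrade
  rw [height_word_coe i hmn, height_word_coe i' hmn'] at hheight
  exact ⟨hgrade.1, by omega, by omega⟩

theorem eq_of_invariantCon_word {i i' m m' : ℕ} {n n' : ℕ∞} (hmn : (m : ℕ∞) ≤ n)
    (hmn' : (m' : ℕ∞) ≤ n') (h : invariantCon (word i m n) (word i' m' n')) :
    (i : ZMod 2) = i' ∧ m = m' ∧ n = n' := by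
  induction n using ENat.recTopCoe with
  | top =>
    induction n' using ENat.recTopCoe with
    | top =>
      obtain ⟨hi, hm⟩ := eq_of_invariantCon_word_top h
      exact ⟨hi, hm, rfl⟩
    | coe n' => exact absurd h (not_invariantCon_word_top_coe (Nat.cast_le.1 hmn'))
  | coe n =>
    induction n' using ENat.recTopCoe with
    | top => exact absurd (Con.symm _ h) (not_invariantCon_word_top_coe (Nat.cast_le.1 hmn))
    | coe n' =>
      obtain ⟨hi, hm, hn⟩ :=
        eq_of_invariantCon_word_coe (Nat.cast_le.1 hmn) (Nat.cast_le.1 hmn') h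
      exact ⟨hi, hm, congrArg _ hn⟩

theorem monomial_injOn :
    Set.InjOn (fun p : Fin 2 × ℕ × ℕ∞ => monomial p.1 p.2.1 p.2.2)
      {p | (p.2.1 : ℕ∞) ≤ p.2.2} := by
  rintro ⟨i, m, n⟩ hmn ⟨i', m', n'⟩ hmn' h
  simp only [← mk'_word] at h
  have hword : invariantCon (word i m n) (word i' m' n') :=
    conGen_rel026_le_invariantCon ((Con.eq _).1 h)
  obtain ⟨hi, rfl, rfl⟩ := eq_of_invariantCon_word hmn hmn' hword
  rw [ZMod.natCast_eq_natCast_iff', Nat.mod_eq_of_lt i.isLt, Nat.mod_eq_of_lt i'.isLt] at hi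
  rw [Fin.ext hi]

end Q026

/-- Every element of `Q` can be written uniquely as `a^i b^m c_n` with
`i ∈ {0,1}`, `m ∈ ℕ`, `n ∈ ℕ ∪ {∞}`, and `m ≤ n` (writing `c_∞ = 1`). -/
theorem Q026_normal_form :
    ∀ x : Q026, ∃! p : Fin 2 × ℕ × ℕ∞,
      (p.2.1 : ℕ∞) ≤ p.2.2 ∧ x = qa ^ (p.1 : ℕ) * qb ^ p.2.1 * qcE p.2.2 := by
  intro x
  obtain ⟨i, m, n, hmn, hx⟩ := Q026.exists_eq_monomial_of_le x
  refine ⟨(i, m, n), ⟨hmn, hx⟩, ?_⟩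
  rintro q ⟨hq, hxq⟩
  exact Q026.monomial_injOn hq hmn (hxq.symm.trans hx)
end

section
/- In the monoid Q associated to the game 0.26, for every heap size k and every m ∈ ℕ with w(H_k) ≤ m, one has b^m · Φ(H_k) = a^{g(H_k)} · b^{m + t(H_k)}, where g(H_k) = (k-1) mod 4. -/
/-- The function `t` on single heaps for 0.26. -/
def t026 (k : ℕ) : ℕ :=
  if k ≤ 2 then 0 else if k ≤ 4 then 1 else (k - 5) / 2

/-- The function `w` on single heaps for 0.26. -/
def w026 (k : ℕ) : ℕ :=
  if k ≤ 8 then 0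
  else if k ≤ 10 then 1
  else if k % 2 = 1 then (k - 7) / 2
  else (k - 12) / 2

/-!
The relation `b^(n+1) c_n = b^(2n+3)` says that `c_n` acts as `b^(n+2)` on every multiple of
`b^(n+1)`. Every `Φ(H_k)` is a power of `a` times a power of `b` times at most one `c_n`, and the
bound `w(H_k) ≤ m` is exactly what makes `b^m`, together with the factor `b` of `Φ(H_k)` when there
is one, a multiple of `b^(n+1)`. The exponent of `a` only matters modulo 2.
-/

theorem pow_mul_eq_pow_add_of_le {M : Type*} [Monoid M] {b c : M} {n r m : ℕ}
    (hc : b ^ n * c = b ^ (n + r)) (hnm : n ≤ m) : b ^ m * c = b ^ (m + r) := by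
  obtain ⟨d, rfl⟩ := Nat.exists_eq_add_of_le' hnm
  rw [pow_add, mul_assoc, hc, ← pow_add, add_assoc]

theorem qa_sq : qa ^ 2 = 1 :=
  (Con.eq _).2 (ConGen.Rel.of _ _ (Or.inl ⟨rfl, rfl⟩))

theorem qa_pow_of_even {j : ℕ} (hj : Even j) : qa ^ j = 1 := by
  rw [pow_eq_pow_mod j qa_sq, Nat.even_iff.1 hj, pow_zero]

theorem qa_pow_of_odd {j : ℕ} (hj : Odd j) : qa ^ j = qa := by
  rw [pow_eq_pow_mod j qa_sq, Nat.odd_iff.1 hj, pow_one]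

theorem qb_pow_succ_mul_qc (n : ℕ) : qb ^ (n + 1) * qc n = qb ^ (2 * n + 3) :=
  (Con.eq _).2 (ConGen.Rel.of _ _ (Or.inr (Or.inl ⟨n, rfl, rfl⟩)))

theorem qb_pow_mul_qc {m n : ℕ} (hnm : n + 1 ≤ m) : qb ^ m * qc n = qb ^ (m + (n + 2)) := by
  refine pow_mul_eq_pow_add_of_le ?_ hnm
  rw [qb_pow_succ_mul_qc]
  congr 1
  omega

theorem le_eight_or_eq_ten_or_eq_two_mul_add (k : ℕ) :
    k ≤ 8 ∨ k = 10 ∨ (∃ n, k = 2 * n + 9) ∨ ∃ n, k = 2 * n + 12 := by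
  have cases_with_witnesses :
      k ≤ 8 ∨ k = 10 ∨ k = 2 * ((k - 9) / 2) + 9 ∨ k = 2 * ((k - 12) / 2) + 12 := by
    omega
  exact cases_with_witnesses.imp_right <| Or.imp_right <|
    Or.imp (fun hodd => ⟨_, hodd⟩) (fun heven => ⟨_, heven⟩)

theorem w026_two_mul_add_nine (n : ℕ) : w026 (2 * n + 9) = n + 1 := by
  unfold w026
  split_ifs <;> omega

theorem w026_two_mul_add_twelve (n : ℕ) : w026 (2 * n + 12) = n := by
  unfold w026
  split_ifs <;> omega

theorem t026_two_mul_add_nine (n : ℕ) : t026 (2 * n + 9) = n + 2 := by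
  unfold t026
  split_ifs <;> omega

theorem t026_two_mul_add_twelve (n : ℕ) : t026 (2 * n + 12) = n + 3 := by
  unfold t026
  split_ifs <;> omega

theorem phi026_of_le_eight {k : ℕ} (hk : 1 ≤ k) (hk8 : k ≤ 8) :
    phi026 k = qa ^ ((k - 1) % 4) * qb ^ t026 k := by
  have qa_cube : qa ^ 3 = qa := qa_pow_of_odd (by decide)
  interval_cases k <;> simp [phi026, t026, qa_sq, qa_cube]

theorem phi026_ten : phi026 10 = qa * qc 0 := by
  simp [phi026]

theorem phi026_two_mul_add_nine (n : ℕ) : phi026 (2 * n + 9) = qc n := by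
  rcases n with _ | n
  · simp [phi026]
  · have index_eq : (2 * (n + 1) + 9 - 9) / 2 = n + 1 := by omega
    unfold phi026
    rw [if_neg (by omega), if_neg (by omega), if_neg (by omega), if_pos (by omega), index_eq]

theorem phi026_two_mul_add_twelve (n : ℕ) : phi026 (2 * n + 12) = qa * qb * qc n := by
  have index_eq : (2 * n + 12 - 12) / 2 = n := by omega
  unfold phi026
  rw [if_neg (by omega), if_neg (by omega), if_neg (by omega), if_neg (by omega), index_eq]

theorem qb_pow_mul_phi026_of_le_eight {k : ℕ} (hk : 1 ≤ k) (hk8 : k ≤ 8) (m : ℕ) :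
    qb ^ m * phi026 k = qa ^ ((k - 1) % 4) * qb ^ (m + t026 k) := by
  rw [phi026_of_le_eight hk hk8, mul_left_comm, ← pow_add]

theorem qb_pow_mul_phi026_ten {m : ℕ} (hm : 1 ≤ m) :
    qb ^ m * phi026 10 = qa * qb ^ (m + 2) := by
  rw [phi026_ten, mul_left_comm, qb_pow_mul_qc hm]

theorem qb_pow_mul_phi026_two_mul_add_nine {m n : ℕ} (hnm : n + 1 ≤ m) :
    qb ^ m * phi026 (2 * n + 9) = qb ^ (m + (n + 2)) := by
  rw [phi026_two_mul_add_nine, qb_pow_mul_qc hnm]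

theorem qb_pow_mul_phi026_two_mul_add_twelve {m n : ℕ} (hnm : n ≤ m) :
    qb ^ m * phi026 (2 * n + 12) = qa * qb ^ (m + (n + 3)) := by
  calc qb ^ m * phi026 (2 * n + 12)
      = qa * (qb ^ (m + 1) * qc n) := by
        rw [phi026_two_mul_add_twelve, pow_succ, mul_assoc qa, mul_left_comm, mul_assoc]
    _ = qa * qb ^ (m + 1 + (n + 2)) := by rw [qb_pow_mul_qc (Nat.succ_le_succ hnm)]
    _ = qa * qb ^ (m + (n + 3)) := by rw [show m + 1 + (n + 2) = m + (n + 3) by omega]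

/-- For every heap size `k ≥ 1` and every `m ∈ ℕ` with `w(H_k) ≤ m`, one has
`b^m Φ(H_k) = a^(g(H_k)) b^(m + t(H_k))`, where `g(H_k) = (k-1) % 4`. -/
theorem phi026_absorb :
    ∀ k : ℕ, 1 ≤ k → ∀ m : ℕ, w026 k ≤ m →
      qb ^ m * phi026 k = qa ^ ((k - 1) % 4) * qb ^ (m + t026 k) := by
  intro k hk m hm
  rcases le_eight_or_eq_ten_or_eq_two_mul_add k with hk8 | rfl | ⟨n, rfl⟩ | ⟨n, rfl⟩
  · exact qb_pow_mul_phi026_of_le_eight hk hk8 m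
  · have hg : Odd ((10 - 1) % 4) := by decide
    rw [qa_pow_of_odd hg]
    exact qb_pow_mul_phi026_ten hm
  · have hg : Even ((2 * n + 9 - 1) % 4) := by grind
    rw [w026_two_mul_add_nine] at hm
    rw [qa_pow_of_even hg, one_mul, t026_two_mul_add_nine, qb_pow_mul_phi026_two_mul_add_nine hm]
  · have hg : Odd ((2 * n + 12 - 1) % 4) := by grind
    rw [w026_two_mul_add_twelve] at hm
    rw [qa_pow_of_odd hg, t026_two_mul_add_twelve, qb_pow_mul_phi026_two_mul_add_twelve hm]
end
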